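/- Sequential composition of probabilistic automata is associative up to simulation equivalence: for probabilistic automata P, Q, R with pairwise disjoint state spaces, P · (Q · R) ≡ (P · Q) · R. -/

import Mathlib

open scoped ENNReal

namespace PCKA

/-- A probabilistic automaton over the (non-silent) action alphabet `α`, with state
space `σ`.  Transition labels are `Option α`, where `none` plays the role of the
silent action `τ`; `trans x a μ` means `x —a→ μ` where `μ` is a (countably
supported) probability distribution over states, `init` is the initial
distribution and `final` the set of final states. -/
structure PAut (α : Type) (σ : Type) where
  trans : σ → Option α → PMF σ → Prop
  init : PMF σ
  final : Set σ

/-- The lifting `S̄ ⊆ D(X) × D(Y)` of a relation `S ⊆ X × D(Y)`: `μ S̄ ν` iff there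
are weights `p n` summing to `1`, states `x n` and distributions `νs n` with
`μ = Σ_n p n · δ_{x n}`, `x n S νs n` for each `n`, and `ν = Σ_n p n · νs n`. -/
def Lift {X Y : Type} (S : X → PMF Y → Prop) (μ : PMF X) (ν : PMF Y) : Prop :=
  ∃ (p : ℕ → ℝ≥0∞) (x : ℕ → X) (νs : ℕ → PMF Y),
    (∑' n, p n) = 1 ∧
    (∀ s, μ s = ∑' n, p n * (PMF.pure (x n)) s) ∧
    (∀ n, S (x n) (νs n)) ∧
    (∀ t, ν t = ∑' n, p n * (νs n) t)

/-- The double lifting `T̿ ⊆ D(X) × D(Z)` of a relation `T ⊆ X × Z`, via a weight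
function `w`. -/
def DLift {X Z : Type} (T : X → Z → Prop) (μ : PMF X) (ψ : PMF Z) : Prop :=
  ∃ w : X → Z → ℝ≥0∞,
    (∀ x z, 0 < w x z → T x z) ∧
    (∀ x, (∑' z, w x z) = μ x) ∧
    (∀ z, (∑' x, w x z) = ψ z)

/-- Flattening `π : D(D(Y)) → D(Y)`, `π(ψ) = Σ_{ν} ψ(ν)·ν`. -/
noncomputable def flat {Y : Type} (ψ : PMF (PMF Y)) : PMF Y := ψ.bind id

/-- Single transition step, with the τ-transitions extended by reflexivity
(`x —τ→ δ_x` is always allowed). -/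
def step {α σ : Type} (P : PAut α σ) (a : Option α) (x : σ) (μ : PMF σ) : Prop :=
  P.trans x a μ ∨ (a = none ∧ μ = PMF.pure x)

/-- Weak internal moves `⇒`: the reflexive-transitive closure of the lifted
(extended) τ-transition relation on distributions. -/
def WeakTau {α σ : Type} (P : PAut α σ) : PMF σ → PMF σ → Prop :=
  Relation.ReflTransGen (Lift (step P none))

/-- Weak `a`-transition `μ ⇒^a μ'`: `μ ⇒ μ₁ —ā→ μ₂ ⇒ μ'`. -/
def WeakStep {α σ : Type} (P : PAut α σ) (a : Option α) (μ μ' : PMF σ) : Prop :=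
  ∃ μ₁ μ₂, WeakTau P μ μ₁ ∧ Lift (step P a) μ₁ μ₂ ∧ WeakTau P μ₂ μ'

/-- A probabilistic simulation from `P` to `Q` (Deng et al. style). -/
structure IsSimulation {α σ τ' : Type} (P : PAut α σ) (Q : PAut α τ')
    (S : σ → PMF τ' → Prop) : Prop where
  init : ∃ ν₀', WeakTau Q Q.init ν₀' ∧ Lift S P.init ν₀'
  step : ∀ x a μ', P.trans x a μ' → ∀ ν, S x ν →
    ∃ ν', WeakStep Q a ν ν' ∧ Lift S μ' ν'
  final : ∀ x ν, x ∈ P.final → S x ν →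
    ∃ ν', WeakTau Q ν ν' ∧ ∀ y ∈ ν'.support, y ∈ Q.final

/-- A probabilistic weak forward simulation from `P` to `Q` (Segala style). -/
structure IsWFSimulation {α σ τ' : Type} (P : PAut α σ) (Q : PAut α τ')
    (S : σ → PMF τ' → Prop) : Prop where
  init : ∃ ψ₀ : PMF (PMF τ'), DLift S P.init ψ₀ ∧ WeakTau Q Q.init (flat ψ₀)
  step : ∀ x a μ', P.trans x a μ' → ∀ ν, S x ν →
    ∃ ψ : PMF (PMF τ'), WeakStep Q a ν (flat ψ) ∧ DLift S μ' ψ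
  final : ∀ x ν, x ∈ P.final → S x ν →
    ∃ ψ : PMF (PMF τ'), (∀ ρ ∈ ψ.support, ∀ y ∈ ρ.support, y ∈ Q.final) ∧
      WeakTau Q ν (flat ψ)

/-- `P ≤ Q`: there exists a probabilistic simulation from `P` to `Q`. -/
def Sim {α σ τ' : Type} (P : PAut α σ) (Q : PAut α τ') : Prop :=
  ∃ S, IsSimulation P Q S

/-- Simulation equivalence `P ≡ Q`. -/
def SimEquiv {α σ τ' : Type} (P : PAut α σ) (Q : PAut α τ') : Prop :=
  Sim P Q ∧ Sim Q P

/-- Convex combination `p·μ + (1−p)·ν` of two distributions. -/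
noncomputable def mix {X : Type} (p : ℝ≥0∞) (hp : p ≤ 1) (μ ν : PMF X) : PMF X :=
  ⟨fun x => p * μ x + (1 - p) * ν x, by
    refine ENNReal.summable.hasSum_iff.mpr ?_
    rw [ENNReal.tsum_add, ENNReal.tsum_mul_left, ENNReal.tsum_mul_left,
      μ.tsum_coe, ν.tsum_coe, mul_one, mul_one, add_tsub_cancel_of_le hp]⟩

/-- Product distribution `μ × ν`, with `(μ × ν)(x,y) = μ(x)·ν(y)`. -/
noncomputable def pprod {X Y : Type} (μ : PMF X) (ν : PMF Y) : PMF (X × Y) :=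
  μ.bind fun x => ν.map fun y => (x, y)

/-- The skip automaton `1`: one state, no transitions, that state is final. -/
noncomputable def skip (α : Type) : PAut α Unit :=
  ⟨fun _ _ _ => False, PMF.pure (), Set.univ⟩

/-- The deadlock automaton `0`: one state, no transitions, no final state. -/
noncomputable def deadlock (α : Type) : PAut α Unit :=
  ⟨fun _ _ _ => False, PMF.pure (), ∅⟩

/-- Nondeterministic choice `P + Q`: disjoint union of the two automata (realised
by the sum type) plus a fresh initial state `z = none` with `z —τ→ μ₀` and
`z —τ→ ν₀`. -/
noncomputable def nchoice {α σ τ' : Type} (P : PAut α σ) (Q : PAut α τ') :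
    PAut α (Option (σ ⊕ τ')) where
  trans := fun s a μ =>
    match s with
    | none => a = none ∧
        (μ = P.init.map (fun x => some (Sum.inl x)) ∨
         μ = Q.init.map (fun y => some (Sum.inr y)))
    | some (Sum.inl x) => ∃ μ', P.trans x a μ' ∧ μ = μ'.map (fun x => some (Sum.inl x))
    | some (Sum.inr y) => ∃ ν', Q.trans y a ν' ∧ μ = ν'.map (fun y => some (Sum.inr y))
  init := PMF.pure none
  final := {s | (∃ x ∈ P.final, s = some (Sum.inl x)) ∨ (∃ y ∈ Q.final, s = some (Sum.inr y))}

/-- Sequential composition `P · Q`: disjoint union (realised by the sum type),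
with a τ-transition from each final state of `P` to the initial distribution of
`Q`; initial distribution that of `P`, final states those of `Q`. -/
noncomputable def pseq {α σ τ' : Type} (P : PAut α σ) (Q : PAut α τ') :
    PAut α (σ ⊕ τ') where
  trans := fun s a μ =>
    match s with
    | Sum.inl x =>
        (∃ μ', P.trans x a μ' ∧ μ = μ'.map Sum.inl) ∨
        (a = none ∧ x ∈ P.final ∧ μ = Q.init.map Sum.inr)
    | Sum.inr y => ∃ ν', Q.trans y a ν' ∧ μ = ν'.map Sum.inr
  init := P.init.map Sum.inl
  final := {s | ∃ y ∈ Q.final, s = Sum.inr y}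

/-- Kleene star `P*`: a fresh state `z = none` which is initial and the only
final state, with `z —τ→ μ₀` and `x —τ→ δ_z` for each final state `x` of `P`. -/
noncomputable def pstar {α σ : Type} (P : PAut α σ) : PAut α (Option σ) where
  trans := fun s a μ =>
    match s with
    | none => a = none ∧ μ = P.init.map some
    | some x =>
        (∃ μ', P.trans x a μ' ∧ μ = μ'.map some) ∨
        (a = none ∧ x ∈ P.final ∧ μ = PMF.pure none)
  init := PMF.pure none
  final := {none}

/-- Probabilistic choice `P ⊕_p Q`: disjoint union with initial distribution
`p·μ₀ + (1−p)·ν₀`. -/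
noncomputable def pchoice {α σ τ' : Type} (p : ℝ≥0∞) (hp : p ≤ 1)
    (P : PAut α σ) (Q : PAut α τ') : PAut α (σ ⊕ τ') where
  trans := fun s a μ =>
    match s with
    | Sum.inl x => ∃ μ', P.trans x a μ' ∧ μ = μ'.map Sum.inl
    | Sum.inr y => ∃ ν', Q.trans y a ν' ∧ μ = ν'.map Sum.inr
  init := mix p hp (P.init.map Sum.inl) (Q.init.map Sum.inr)
  final := {s | (∃ x ∈ P.final, s = Sum.inl x) ∨ (∃ y ∈ Q.final, s = Sum.inr y)}

/-- CSP-style parallel composition `P ∥_A Q` synchronising on the frame `A`: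
actions in `A` must be performed jointly, all other actions (including τ) are
interleaved. -/
noncomputable def par {α σ τ' : Type} (A : Set α) (P : PAut α σ) (Q : PAut α τ') :
    PAut α (σ × τ') where
  trans := fun s a μπ => ∃ μ ν, μπ = pprod μ ν ∧
    ((∃ b ∈ A, a = some b ∧ P.trans s.1 a μ ∧ Q.trans s.2 a ν) ∨
     ((∀ b ∈ A, a ≠ some b) ∧ P.trans s.1 a μ ∧ ν = PMF.pure s.2) ∨
     ((∀ b ∈ A, a ≠ some b) ∧ Q.trans s.2 a ν ∧ μ = PMF.pure s.1))
  init := pprod P.init Q.init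
  final := {s | s.1 ∈ P.final ∧ s.2 ∈ Q.final}

/-!
The graph `{(x, δ_{f x})}` of a homomorphism `f` of automata is a simulation, so it suffices that
both directions of the associator of disjoint unions are homomorphisms. The components include into
a sequential composition by transition-preserving maps, and a copairing out of a sequential
composition preserves transitions as soon as both of its parts do and it respects the glueing
`τ`-transitions; both directions of the associator are copairings of such inclusions.
-/

section Lift

theorem pmf_map_eq_self {X : Type*} {μ : PMF X} {f : X → X} (h : ∀ x ∈ μ.support, f x = x) :
    μ.map f = μ := by
  calc μ.map f
      = μ.bindOnSupport fun x _ => PMF.pure (f x) := (μ.bindOnSupport_eq_bind _).symm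
    _ = μ.bindOnSupport fun x _ => PMF.pure x := by
        congr with x hx : 2
        rw [h x hx]
    _ = μ := μ.bindOnSupport_pure

theorem exists_pmf_nat_map_eq {X : Type*} (μ : PMF X) :
    ∃ (p : PMF ℕ) (x : ℕ → X), p.map x = μ ∧ ∀ n, x n ∈ μ.support := by
  obtain ⟨x, hx⟩ := μ.support_countable.exists_eq_range μ.support_nonempty
  refine ⟨μ.map (Function.invFun x), x, ?_, fun n => hx ▸ Set.mem_range_self n⟩
  rw [PMF.map_comp]
  exact pmf_map_eq_self fun s hs => Function.invFun_eq (hx ▸ hs : s ∈ Set.range x)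

variable {X Y : Type} {S : X → PMF Y → Prop}

theorem lift_bind {μ : PMF X} {κ : X → PMF Y} (h : ∀ x ∈ μ.support, S x (κ x)) :
    Lift S μ (μ.bind κ) := by
  obtain ⟨p, x, hμ, x_mem⟩ := exists_pmf_nat_map_eq μ
  refine ⟨p, x, κ ∘ x, p.tsum_coe, fun s => ?_, fun n => h _ (x_mem n), fun t => ?_⟩
  · rw [← hμ, ← PMF.bind_pure_comp, PMF.bind_apply]
    rfl
  · rw [← PMF.bind_apply, ← PMF.bind_map, hμ]

theorem lift_pure {x : X} {ν : PMF Y} (h : S x ν) : Lift S (PMF.pure x) ν := by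
  rw [← PMF.pure_bind x fun _ => ν]
  refine lift_bind fun y hy => ?_
  rwa [(PMF.mem_support_pure_iff x y).mp hy]

theorem lift_graph_map (f : X → Y) (μ : PMF X) :
    Lift (fun x ν => ν = PMF.pure (f x)) μ (μ.map f) :=
  lift_bind fun _ _ => rfl

end Lift

section Hom

variable {α σ υ ρ : Type}

/-- `f` maps every transition `x —a→ μ` of `P` to the transition `f x —a→ f_* μ` of `Q`. Initial
distributions and final states are left out, so that the inclusions of the components of a
sequential composition qualify. -/
def PreservesTrans (P : PAut α σ) (Q : PAut α υ) (f : σ → υ) : Prop :=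
  ∀ ⦃x a μ⦄, P.trans x a μ → Q.trans (f x) a (μ.map f)

/-- Homomorphisms of probabilistic automata: state maps preserving the initial distribution, the
transitions and finality on the nose, with no weak moves involved. -/
structure IsHom (P : PAut α σ) (Q : PAut α υ) (f : σ → υ) : Prop where
  map_init : P.init.map f = Q.init
  preservesTrans : PreservesTrans P Q f
  mapsTo_final : Set.MapsTo f P.final Q.final

variable {P : PAut α σ} {Q : PAut α υ} {A : PAut α ρ}

theorem PreservesTrans.comp {f : σ → υ} {g : υ → ρ} (hg : PreservesTrans Q A g)
    (hf : PreservesTrans P Q f) : PreservesTrans P A (g ∘ f) := fun _ _ μ h =>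
  μ.map_comp f g ▸ hg (hf h)

theorem IsHom.isSimulation_graph {f : σ → υ} (hf : IsHom P Q f) :
    IsSimulation P Q fun x ν => ν = PMF.pure (f x) where
  init := ⟨Q.init, .refl, hf.map_init ▸ lift_graph_map f P.init⟩
  step := by
    rintro x a μ hμ _ rfl
    exact ⟨μ.map f, ⟨_, _, .refl, lift_pure (.inl (hf.preservesTrans hμ)), .refl⟩,
      lift_graph_map f μ⟩
  final := by
    rintro x _ hx rfl
    refine ⟨PMF.pure (f x), .refl, fun y hy => ?_⟩
    exact (PMF.mem_support_pure_iff _ y).mp hy ▸ hf.mapsTo_final hx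

theorem IsHom.sim {f : σ → υ} (hf : IsHom P Q f) : Sim P Q :=
  ⟨_, hf.isSimulation_graph⟩

end Hom

section Pseq

variable {α σ υ ρ : Type}

theorem preservesTrans_inl (P : PAut α σ) (Q : PAut α υ) :
    PreservesTrans P (pseq P Q) Sum.inl := fun _ _ μ h =>
  .inl ⟨μ, h, rfl⟩

theorem preservesTrans_inr (P : PAut α σ) (Q : PAut α υ) :
    PreservesTrans Q (pseq P Q) Sum.inr := fun _ _ ν h =>
  ⟨ν, h, rfl⟩

theorem pseq_trans_of_mem_final {P : PAut α σ} (Q : PAut α υ) {x : σ} (hx : x ∈ P.final) :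
    (pseq P Q).trans (Sum.inl x) none (Q.init.map Sum.inr) :=
  .inr ⟨rfl, hx, rfl⟩

theorem inr_mem_pseq_final (P : PAut α σ) {Q : PAut α υ} {y : υ} (hy : y ∈ Q.final) :
    Sum.inr y ∈ (pseq P Q).final :=
  ⟨y, hy, rfl⟩

variable {P : PAut α σ} {Q : PAut α υ} {A : PAut α ρ} {f : σ → ρ} {g : υ → ρ}

theorem pseq_init_map_elim : (pseq P Q).init.map (Sum.elim f g) = P.init.map f := by
  rw [pseq, PMF.map_comp, Sum.elim_comp_inl]

theorem PreservesTrans.sumElim (hf : PreservesTrans P A f) (hg : PreservesTrans Q A g)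
    (glue : ∀ x ∈ P.final, A.trans (f x) none (Q.init.map g)) :
    PreservesTrans (pseq P Q) A (Sum.elim f g) := by
  rintro (x | y) a _ h
  · obtain ⟨μ, h, rfl⟩ | ⟨rfl, hx, rfl⟩ := h
    · rw [PMF.map_comp, Sum.elim_comp_inl]
      exact hf h
    · rw [PMF.map_comp, Sum.elim_comp_inr]
      exact glue x hx
  · obtain ⟨ν, h, rfl⟩ := h
    rw [PMF.map_comp, Sum.elim_comp_inr]
    exact hg h

theorem IsHom.sumElim (map_init : P.init.map f = A.init)
    (hf : PreservesTrans P A f) (hg : PreservesTrans Q A g)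
    (glue : ∀ x ∈ P.final, A.trans (f x) none (Q.init.map g))
    (mapsTo_final : Set.MapsTo g Q.final A.final) :
    IsHom (pseq P Q) A (Sum.elim f g) where
  map_init := pseq_init_map_elim.trans map_init
  preservesTrans := hf.sumElim hg glue
  mapsTo_final := by
    rintro _ ⟨y, hy, rfl⟩
    exact mapsTo_final hy

end Pseq

section Assoc

variable {α σ₁ σ₂ σ₃ : Type} (P : PAut α σ₁) (Q : PAut α σ₂) (R : PAut α σ₃)

theorem isHom_sumAssoc_symm :
    IsHom (pseq P (pseq Q R)) (pseq (pseq P Q) R) (Equiv.sumAssoc σ₁ σ₂ σ₃).symm := by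
  have inl_PQ := preservesTrans_inl (pseq P Q) R
  refine IsHom.sumElim (PMF.map_comp ..).symm (inl_PQ.comp (preservesTrans_inl P Q)) ?_ ?_ ?_
  · exact (inl_PQ.comp (preservesTrans_inr P Q)).sumElim (preservesTrans_inr (pseq P Q) R)
      fun y hy => pseq_trans_of_mem_final R (inr_mem_pseq_final P hy)
  · intro x hx
    rw [pseq_init_map_elim, ← PMF.map_comp]
    exact inl_PQ (pseq_trans_of_mem_final Q hx)
  · rintro _ ⟨z, hz, rfl⟩
    exact inr_mem_pseq_final _ hz

theorem isHom_sumAssoc :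
    IsHom (pseq (pseq P Q) R) (pseq P (pseq Q R)) (Equiv.sumAssoc σ₁ σ₂ σ₃) := by
  have inr_QR := preservesTrans_inr P (pseq Q R)
  refine IsHom.sumElim pseq_init_map_elim ?_ (inr_QR.comp (preservesTrans_inr Q R)) ?_ ?_
  · refine (preservesTrans_inl P (pseq Q R)).sumElim (inr_QR.comp (preservesTrans_inl Q R)) ?_
    intro x hx
    rw [← PMF.map_comp]
    exact pseq_trans_of_mem_final (pseq Q R) hx
  · rintro _ ⟨y, hy, rfl⟩
    rw [← PMF.map_comp]
    exact inr_QR (pseq_trans_of_mem_final R hy)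
  · exact fun z hz => inr_mem_pseq_final P (inr_mem_pseq_final Q hz)

end Assoc

/-- sequential composition is associative up to simulation
equivalence: `P · (Q · R) ≡ (P · Q) · R`. -/
theorem seq_assoc {α σ₁ σ₂ σ₃ : Type}
    (P : PAut α σ₁) (Q : PAut α σ₂) (R : PAut α σ₃) :
    SimEquiv (pseq P (pseq Q R)) (pseq (pseq P Q) R) :=
  ⟨(isHom_sumAssoc_symm P Q R).sim, (isHom_sumAssoc P Q R).sim⟩

end PCKA
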